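/- Let X be a Tychonoff separably λ-submetrizable space and λ ∈ Ψ. Then X has property S_fin(Λ(λ), Λ(λ)) if and only if C_λ(X) is M-separable. -/

import Mathlib

open Set Filter Topology TopologicalSpace ContinuousMap

/-- A subset `A` of `X` is *C-compact* if `f '' A` is compact in `ℝ` for every
continuous real-valued function `f` on `X`. -/
def IsCCompact {X : Type*} [TopologicalSpace X] (A : Set X) : Prop :=
  ∀ f : C(X, ℝ), IsCompact (f '' A)

/-- The `λ`-open (set-open) topology on `C(X, ℝ)`, generated by the subbasic sets
`[F, U] = {f : f '' F ⊆ U}` for `F ∈ lam` and `U ⊆ ℝ` open. -/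
def setOpenTopology {X : Type*} [TopologicalSpace X] (lam : Set (Set X)) :
    TopologicalSpace C(X, ℝ) :=
  TopologicalSpace.generateFrom
    {S | ∃ F ∈ lam, ∃ U : Set ℝ, IsOpen U ∧ S = {f : C(X, ℝ) | f '' F ⊆ U}}

/-- Membership in the collection `Ψ`: a family of nonempty closed C-compact subsets of `X`
forming a π-network, hereditary with respect to (closed) C-compact subsets of its elements,
and maximal among families of nonempty sets inducing the same set-open topology. -/
structure MemPsi {X : Type*} [TopologicalSpace X] (lam : Set (Set X)) : Prop where
  nonempty : ∀ A ∈ lam, A.Nonempty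
  closed : ∀ A ∈ lam, IsClosed A
  ccompact : ∀ A ∈ lam, IsCCompact A
  piNetwork : ∀ U : Set X, IsOpen U → U.Nonempty → ∃ A ∈ lam, A ⊆ U
  hereditary : ∀ A ∈ lam, ∀ B : Set X, B ⊆ A → B.Nonempty → IsClosed B → IsCCompact B →
    B ∈ lam
  maximal : ∀ lam' : Set (Set X), (∀ A ∈ lam', A.Nonempty) →
    setOpenTopology lam' = setOpenTopology lam → lam' ⊆ lam

/-- A cozero (functional open) subset of `X`: the complement of a zero-set. -/
def IsCozero {X : Type*} [TopologicalSpace X] (U : Set X) : Prop :=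
  ∃ f : C(X, ℝ), U = {x | f x ≠ 0}

/-- `𝒰` is a `λ`-f-cover: a family of cozero sets, not containing `X`, such that every
member of `lam` is contained in some member of `𝒰`. -/
def IsFCover {X : Type*} [TopologicalSpace X] (lam : Set (Set X)) (𝒰 : Set (Set X)) : Prop :=
  (Set.univ : Set X) ∉ 𝒰 ∧ (∀ U ∈ 𝒰, IsCozero U) ∧ ∀ A ∈ lam, ∃ U ∈ 𝒰, A ⊆ U

/-- `Λ(λ)`: the collection of all `λ`-f-covers of `X`. -/
def fCovers {X : Type*} [TopologicalSpace X] (lam : Set (Set X)) : Set (Set (Set X)) :=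
  {𝒰 | IsFCover lam 𝒰}

/-- The selection principle `S₁(𝒜, ℬ)`. -/
def S1 {α : Type*} (𝒜 ℬ : Set (Set α)) : Prop :=
  ∀ A : ℕ → Set α, (∀ n, A n ∈ 𝒜) →
    ∃ b : ℕ → α, (∀ n, b n ∈ A n) ∧ Set.range b ∈ ℬ

/-- The selection principle `S_fin(𝒜, ℬ)`. -/
def Sfin {α : Type*} (𝒜 ℬ : Set (Set α)) : Prop :=
  ∀ A : ℕ → Set α, (∀ n, A n ∈ 𝒜) →
    ∃ B : ℕ → Set α, (∀ n, (B n).Finite ∧ B n ⊆ A n) ∧ (⋃ n, B n) ∈ ℬ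

/-- `Ω_y` with respect to the topology `t`: sets having `y` in their closure but not
containing `y`. -/
def OmegaPt {Y : Type*} (t : TopologicalSpace Y) (y : Y) : Set (Set Y) :=
  {A | y ∈ @closure Y t A ∧ y ∉ A}

/-- Countable `(t₁, t₂)`-tightness of a bitopological space. -/
def CountableBiTightness {Y : Type*} (t1 t2 : TopologicalSpace Y) : Prop :=
  ∀ A : Set Y, ∀ f ∈ @closure Y t1 A, ∃ B ⊆ A, B.Countable ∧ f ∈ @closure Y t2 B

/-- `X` is `λ`-`μ`-Lindelöf: every `λ`-f-cover has a countable subfamily which is a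
`μ`-f-cover. -/
def LamMuLindelof {X : Type*} [TopologicalSpace X] (lam mu : Set (Set X)) : Prop :=
  ∀ 𝒰 : Set (Set X), IsFCover lam 𝒰 → ∃ 𝒱 ⊆ 𝒰, 𝒱.Countable ∧ IsFCover mu 𝒱

/-- Countable `(t₁, t₂)`-T-tightness: for every uncountable regular cardinal `κ` and every
increasing `κ`-indexed sequence of `t₁`-closed sets, the union is `t₂`-closed. -/
def CountableBiTTightness {Y : Type*} (t1 t2 : TopologicalSpace Y) : Prop :=
  ∀ κ : Cardinal.{0}, Cardinal.aleph0 < κ → κ.IsRegular →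
    ∀ A : κ.ord.ToType → Set Y, Monotone A → (∀ α, @IsClosed Y t1 (A α)) →
      @IsClosed Y t2 (⋃ α, A α)

/-- `X` is separably `λ`-submetrizable: there is a continuous map of `X` onto a separable
metric space which is one-to-one on `⋃ lam`. -/
def SeparablyLamSubmetrizable (X : Type*) [TopologicalSpace X] (lam : Set (Set X)) : Prop :=
  ∃ (Y : Type) (m : MetricSpace Y),
    @SeparableSpace Y m.toPseudoMetricSpace.toUniformSpace.toTopologicalSpace ∧
    ∃ f : X → Y,
      @Continuous X Y _ m.toPseudoMetricSpace.toUniformSpace.toTopologicalSpace f ∧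
      Function.Surjective f ∧ Set.InjOn f (⋃₀ lam)

/-- `R`-separability for a pair of topologies: from every sequence of `t₁`-dense sets one
can pick single points forming a `t₂`-dense set. -/
def RSepBi {Y : Type*} (t1 t2 : TopologicalSpace Y) : Prop :=
  ∀ D : ℕ → Set Y, (∀ n, @Dense Y t1 (D n)) →
    ∃ d : ℕ → Y, (∀ n, d n ∈ D n) ∧ @Dense Y t2 (Set.range d)

/-- `M`-separability for a pair of topologies. -/
def MSepBi {Y : Type*} (t1 t2 : TopologicalSpace Y) : Prop :=
  ∀ D : ℕ → Set Y, (∀ n, @Dense Y t1 (D n)) →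
    ∃ F : ℕ → Set Y, (∀ n, (F n).Finite ∧ F n ⊆ D n) ∧ @Dense Y t2 (⋃ n, F n)

/-- `H`-separability for a pair of topologies. -/
def HSepBi {Y : Type*} (t1 t2 : TopologicalSpace Y) : Prop :=
  ∀ D : ℕ → Set Y, (∀ n, @Dense Y t1 (D n)) →
    ∃ F : ℕ → Set Y, (∀ n, (F n).Finite ∧ F n ⊆ D n) ∧
      ∀ G : Set Y, @IsOpen Y t2 G → G.Nonempty →
        ∀ᶠ n in Filter.atTop, (G ∩ F n).Nonempty

/-- A countable set `D` is groupable with respect to the topology `t`. -/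
def GroupableIn {Y : Type*} (t : TopologicalSpace Y) (D : Set Y) : Prop :=
  ∃ A : ℕ → Set Y, (∀ n, (A n).Finite) ∧ D = ⋃ n, A n ∧
    ∀ G : Set Y, @IsOpen Y t G → G.Nonempty →
      ∀ᶠ n in Filter.atTop, (G ∩ A n).Nonempty

/-- `GN`-separability for a pair of topologies. -/
def GNSepBi {Y : Type*} (t1 t2 : TopologicalSpace Y) : Prop :=
  ∀ D : ℕ → Set Y, (∀ n, @Dense Y t1 (D n)) →
    ∃ d : ℕ → Y, (∀ n, d n ∈ D n) ∧ @Dense Y t2 (Set.range d) ∧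
      GroupableIn t2 (Set.range d)

/-- The `(t₁, t₂)`-Pytkeev property for a bitopological space. -/
def PytkeevBi {Y : Type*} (t1 t2 : TopologicalSpace Y) : Prop :=
  ∀ A : Set Y, ∀ g ∈ @closure Y t1 A, g ∉ A →
    ∃ B : ℕ → Set Y, (∀ n, (B n).Infinite ∧ B n ⊆ A) ∧
      ∀ G ∈ @nhds Y t2 g, ∃ n, B n ⊆ G

/-- A groupable `μ`-f-cover. -/
def GroupableFCover {X : Type*} [TopologicalSpace X] (mu 𝒱 : Set (Set X)) : Prop :=
  𝒱.Countable ∧ IsFCover mu 𝒱 ∧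
    ∃ G : ℕ → Set (Set X), (∀ m, (G m).Finite) ∧
      (Pairwise fun m k => Disjoint (G m) (G k)) ∧ 𝒱 = ⋃ m, G m ∧
      ∀ F ∈ mu, ∀ᶠ m in Filter.atTop, ∃ U ∈ G m, F ⊆ U

/-!
For `λ` directed, C-compact and stable under traces of closed conditions, `τ_λ` is the topology of
uniform convergence on the members of `λ`: a C-compact set is cut into finitely many traces on
which a given function is nearly constant.

The cozero sets `{x | |d x - f x| < ε}` turn approximations of `f` from sets `D n` into
`λ`-f-covers, so `S_fin(Λ(λ), Λ(λ))` gives countable fan tightness of `C_λ(X)`. A separable space of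
countable fan tightness is M-separable, and `C_λ(X)` is separable because, after embedding a
separable metric space in the Hilbert cube `K`, Tietze extension makes the image of the separable
space `C(K, ℝ)` dense in it.
Conversely, the functions equal to `1` off some member of a `λ`-f-cover are dense in `C_λ(X)`.
-/

section

variable {X : Type*} [TopologicalSpace X] {lam : Set (Set X)}

namespace IsCCompact

variable {A : Set X}

lemma isClosed_image {Y : Type*} [TopologicalSpace Y] [MetrizableSpace Y] (hA : IsCCompact A)
    {f : X → Y} (hf : Continuous f) : IsClosed (f '' A) := by
  let := metrizableSpaceMetric Y
  refine isClosed_of_closure_subset fun y hy => ?_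
  let distTo : C(X, ℝ) := ⟨fun x => dist (f x) y, by fun_prop⟩
  have h_zero : (0 : ℝ) ∈ closure (distTo '' A) := by
    have h := mem_closure_image (f := fun z => dist z y) (by fun_prop) hy
    rwa [dist_self, image_image] at h
  rw [(hA distTo).isClosed.closure_eq] at h_zero
  obtain ⟨x, hx, hxy⟩ := h_zero
  exact ⟨x, hx, dist_eq_zero.1 hxy⟩

lemma isCompact_image {Y : Type*} [TopologicalSpace Y] [MetrizableSpace Y] [SeparableSpace Y]
    (hA : IsCCompact A) {f : X → Y} (hf : Continuous f) : IsCompact (f '' A) := by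
  let := metrizableSpaceMetric Y
  obtain ⟨e, he⟩ := Metric.PiNatEmbed.exists_embedding_to_hilbert_cube (X := Y)
  have h_closed : IsClosed (e '' (f '' A)) := by
    rw [← image_comp]
    exact hA.isClosed_image (he.continuous.comp hf)
  exact he.isInducing.isCompact_iff.2 h_closed.isCompact

lemma inter_preimage (hA : IsCCompact A) (f : C(X, ℝ)) {C : Set ℝ} (hC : IsClosed C) :
    IsCCompact (A ∩ f ⁻¹' C) := by
  intro g
  have h_joint : IsCompact ((fun x => (f x, g x)) '' A ∩ Prod.fst ⁻¹' C) :=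
    (hA.isCompact_image (by fun_prop)).inter_right (hC.preimage continuous_fst)
  have h_snd := h_joint.image continuous_snd
  rwa [← image_inter_preimage, image_image] at h_snd

lemma sUnion {t : Set (Set X)} (ht : t.Finite) (h : ∀ A ∈ t, IsCCompact A) :
    IsCCompact (⋃₀ t) := by
  intro f
  rw [image_sUnion, sUnion_image]
  exact ht.isCompact_biUnion fun A hA => h A hA f

lemma exists_extension {K : Type*} [TopologicalSpace K] [MetrizableSpace K] [SeparableSpace K]
    (hA : IsCCompact A) {φ : X → K} (hφ : Continuous φ) (hφ_inj : InjOn φ A) (g : C(X, ℝ)) :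
    ∃ G : C(K, ℝ), ∀ x ∈ A, G (φ x) = g x := by
  let := metrizableSpaceMetric K
  -- The graph of `g ∘ φ⁻¹` over `φ '' A` is compact, so its projection is a closed embedding.
  let Γ : Set (K × ℝ) := (fun x => (φ x, g x)) '' A
  have : CompactSpace Γ :=
    isCompact_iff_compactSpace.1 (hA.isCompact_image (hφ.prodMk g.continuous))
  have h_emb : IsClosedEmbedding fun p : Γ => p.1.1 := by
    refine Continuous.isClosedEmbedding (by fun_prop) ?_
    rintro ⟨_, x, hx, rfl⟩ ⟨_, y, hy, rfl⟩ hxy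
    obtain rfl := hφ_inj hx hy hxy
    rfl
  obtain ⟨G, hG⟩ := ContinuousMap.exists_extension' h_emb ⟨fun p : Γ => p.1.2, by fun_prop⟩
  exact ⟨G, fun x hx => congrFun hG ⟨_, x, hx, rfl⟩⟩

lemma exists_eqOn_one_eqOn_zero_compl (hA : IsCCompact A) {U : Set X} (hU : IsCozero U)
    (hAU : A ⊆ U) : ∃ χ : C(X, ℝ), EqOn χ 1 A ∧ EqOn χ 0 Uᶜ := by
  obtain ⟨u, rfl⟩ := hU
  have h_disj : Disjoint {0} (u '' A) := by
    rw [disjoint_singleton_left]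
    rintro ⟨x, hx, hux⟩
    exact hAU hx hux
  obtain ⟨ψ, hψ₀, hψ₁, -⟩ :=
    exists_continuous_zero_one_of_isClosed isClosed_singleton (hA u).isClosed h_disj
  refine ⟨ψ.comp u, fun x hx => hψ₁ (mem_image_of_mem u hx), fun x hx => hψ₀ ?_⟩
  simpa using hx

end IsCCompact

lemma isCozero_setOf_lt (f g : C(X, ℝ)) : IsCozero {x | f x < g x} := by
  refine ⟨(g - f) ⊔ 0, ?_⟩
  ext x
  simp

lemma isOpen_setOpenTopology {A : Set X} (hA : A ∈ lam) {U : Set ℝ} (hU : IsOpen U) :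
    IsOpen[setOpenTopology lam] {f : C(X, ℝ) | f '' A ⊆ U} :=
  isOpen_generateFrom_of_mem ⟨A, hA, U, hU, rfl⟩

lemma setOpenTopology_anti {lam' : Set (Set X)} (h : lam ⊆ lam') :
    setOpenTopology lam' ≤ setOpenTopology lam :=
  generateFrom_anti fun _ ⟨A, hA, hU⟩ => ⟨A, h hA, hU⟩

lemma setOpenTopology_insert_union {A B : Set X} (hA : A ∈ lam) (hB : B ∈ lam) :
    setOpenTopology (insert (A ∪ B) lam) = setOpenTopology lam := by
  refine le_antisymm (setOpenTopology_anti (subset_insert _ _)) (le_generateFrom ?_)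
  rintro _ ⟨C, rfl | hC, U, hU, rfl⟩
  · simp only [image_union, union_subset_iff]
    let := setOpenTopology lam
    exact (isOpen_setOpenTopology hA hU).inter (isOpen_setOpenTopology hB hU)
  · exact isOpen_setOpenTopology hC hU

/-- The part of heredity that concerns traces: if `A ∈ λ`, then the set of points of `A` at which a
continuous function takes values in a given closed set belongs to `λ`, unless it is empty. -/
def TraceClosed (lam : Set (Set X)) : Prop :=
  ∀ A ∈ lam, ∀ (f : C(X, ℝ)) (C : Set ℝ), IsClosed C → (A ∩ f ⁻¹' C).Nonempty → A ∩ f ⁻¹' C ∈ lam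

namespace MemPsi

lemma union_mem (hlam : MemPsi lam) {A B : Set X} (hA : A ∈ lam) (hB : B ∈ lam) :
    A ∪ B ∈ lam := by
  refine hlam.maximal _ ?_ (setOpenTopology_insert_union hA hB) (mem_insert _ _)
  rintro C (rfl | hC)
  · exact (hlam.nonempty A hA).inl
  · exact hlam.nonempty C hC

lemma directedOn (hlam : MemPsi lam) : DirectedOn (· ⊆ ·) lam := fun A hA B hB =>
  ⟨A ∪ B, hlam.union_mem hA hB, subset_union_left, subset_union_right⟩

lemma traceClosed (hlam : MemPsi lam) : TraceClosed lam := fun A hA f _ hC hne =>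
  hlam.hereditary A hA _ inter_subset_left hne ((hlam.closed A hA).inter (hC.preimage f.continuous))
    ((hlam.ccompact A hA).inter_preimage f hC)

end MemPsi

/-- The functions uniformly `ε`-close to `f` at the points of `A`; for `A ∈ λ` these are the basic
neighbourhoods of `f` in `C_λ(X)`. The bound is pointwise, so on a non-C-compact `A` the supremum
of `|g - f|` may equal `ε`. -/
def uniformBall (A : Set X) (f : C(X, ℝ)) (ε : ℝ) : Set C(X, ℝ) :=
  {g | ∀ x ∈ A, |g x - f x| < ε}

lemma uniformBall_subset_uniformBall {A B : Set X} (hAB : A ⊆ B) (f : C(X, ℝ)) {ε δ : ℝ}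
    (h : ε ≤ δ) : uniformBall B f ε ⊆ uniformBall A f δ :=
  fun _ hg x hx => (hg x (hAB hx)).trans_le h

lemma exists_finite_uniformBall_subset (hc : ∀ A ∈ lam, IsCCompact A) {f : C(X, ℝ)}
    {G : Set C(X, ℝ)} (hG : IsOpen[setOpenTopology lam] G) (hf : f ∈ G) :
    ∃ t ⊆ lam, t.Finite ∧ ∃ ε > 0, uniformBall (⋃₀ t) f ε ⊆ G := by
  induction hG with
  | basic S hS =>
    obtain ⟨A, hA, U, hU, rfl⟩ := hS
    obtain ⟨ε, hε, hεU⟩ := (hc A hA f).exists_thickening_subset_open hU hf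
    refine ⟨{A}, singleton_subset_iff.2 hA, finite_singleton A, ε, hε, ?_⟩
    rintro g hg _ ⟨x, hx, rfl⟩
    rw [sUnion_singleton] at hg
    exact hεU (Metric.mem_thickening_iff.2 ⟨f x, mem_image_of_mem f hx, hg x hx⟩)
  | univ => exact ⟨∅, empty_subset _, finite_empty, 1, one_pos, subset_univ _⟩
  | inter S T _ _ ihS ihT =>
    obtain ⟨s, hs, hs_fin, ε, hε, hεS⟩ := ihS hf.1
    obtain ⟨t, ht, ht_fin, δ, hδ, hδT⟩ := ihT hf.2
    refine ⟨s ∪ t, union_subset hs ht, hs_fin.union ht_fin, min ε δ, lt_min hε hδ,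
      subset_inter ?_ ?_⟩
    · exact (uniformBall_subset_uniformBall (sUnion_mono subset_union_left) f
        (min_le_left _ _)).trans hεS
    · exact (uniformBall_subset_uniformBall (sUnion_mono subset_union_right) f
        (min_le_right _ _)).trans hδT
  | sUnion K _ ih =>
    obtain ⟨S, hS, hfS⟩ := hf
    obtain ⟨t, ht, ht_fin, ε, hε, hεS⟩ := ih S hS hfS
    exact ⟨t, ht, ht_fin, ε, hε, hεS.trans (subset_sUnion_of_mem hS)⟩

lemma exists_uniformBall_subset (hc : ∀ A ∈ lam, IsCCompact A) (hd : DirectedOn (· ⊆ ·) lam)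
    (hne : lam.Nonempty) {f : C(X, ℝ)} {G : Set C(X, ℝ)} (hG : IsOpen[setOpenTopology lam] G)
    (hf : f ∈ G) : ∃ A ∈ lam, ∃ ε > 0, uniformBall A f ε ⊆ G := by
  obtain ⟨t, ht, ht_fin, ε, hε, hεG⟩ := exists_finite_uniformBall_subset hc hG hf
  have := hne.to_subtype
  have := ht_fin.to_subtype
  obtain ⟨⟨A, hA⟩, h_le⟩ := hd.directed_val.finite_le (inclusion ht)
  exact ⟨A, hA, ε, hε,
    (uniformBall_subset_uniformBall (sUnion_subset fun B hB => h_le ⟨B, hB⟩) f le_rfl).trans hεG⟩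

lemma uniformBall_mem_nhds (hc : ∀ A ∈ lam, IsCCompact A) (ht : TraceClosed lam)
    {A : Set X} (hA : A ∈ lam) (f : C(X, ℝ)) {ε : ℝ} (hε : 0 < ε) :
    uniformBall A f ε ∈ @nhds _ (setOpenTopology lam) f := by
  let := setOpenTopology lam
  obtain ⟨c, hcA, hc_fin, h_cover⟩ :=
    (hc A hA f).finite_cover_balls (show 0 < ε / 3 by positivity)
  let piece (y : ℝ) : Set X := A ∩ f ⁻¹' Metric.closedBall y (ε / 3)
  have h_piece : ∀ y ∈ c, piece y ∈ lam := by
    intro y hy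
    obtain ⟨x, hx, rfl⟩ := hcA hy
    exact ht A hA f _ Metric.isClosed_closedBall
      ⟨x, hx, Metric.mem_closedBall_self (by positivity)⟩
  have h_open : IsOpen (⋂ y ∈ c, {g : C(X, ℝ) | g '' piece y ⊆ Metric.ball y (ε / 2)}) :=
    hc_fin.isOpen_biInter fun y hy => isOpen_setOpenTopology (h_piece y hy) Metric.isOpen_ball
  refine mem_of_superset (h_open.mem_nhds (mem_iInter₂.2 fun y _ => ?_)) fun g hg x hx => ?_
  · rintro _ ⟨x, ⟨-, hx⟩, rfl⟩
    exact Metric.closedBall_subset_ball (by linarith) hx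
  · obtain ⟨y, hy, hxy⟩ := mem_iUnion₂.1 (h_cover (mem_image_of_mem f hx))
    have hgx : g x ∈ Metric.ball y (ε / 2) :=
      mem_iInter₂.1 hg y hy ⟨x, ⟨hx, Metric.ball_subset_closedBall hxy⟩, rfl⟩
    calc |g x - f x| = dist (g x) (f x) := (Real.dist_eq _ _).symm
      _ ≤ dist (g x) y + dist (f x) y := dist_triangle_right _ _ _
      _ < ε / 2 + ε / 3 := add_lt_add hgx hxy
      _ < ε := by linarith

section Separable

variable {K : Type*} [TopologicalSpace K]

lemma continuous_comp_setOpenTopology (φ : C(X, K)) (hφ : ∀ A ∈ lam, IsCompact (φ '' A)) :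
    Continuous[compactOpen, setOpenTopology lam] fun G : C(K, ℝ) => G.comp φ := by
  refine continuous_generateFrom_iff.2 ?_
  rintro _ ⟨A, hA, U, hU, rfl⟩
  have h_open := isOpen_setOfPred_mapsTo (hφ A hA) hU
  simp only [mapsTo_iff_image_subset, image_image] at h_open
  exact h_open

lemma denseRange_comp_setOpenTopology [MetrizableSpace K] [SeparableSpace K]
    (hc : ∀ A ∈ lam, IsCCompact A) (φ : C(X, K)) (hφ : InjOn φ (⋃₀ lam)) :
    @DenseRange _ (setOpenTopology lam) _ fun G : C(K, ℝ) => G.comp φ := by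
  let := setOpenTopology lam
  refine dense_iff_inter_open.2 ?_
  rintro V hV ⟨g, hg⟩
  obtain ⟨t, ht, ht_fin, ε, hε, hεV⟩ := exists_finite_uniformBall_subset hc hV hg
  obtain ⟨G, hG⟩ := (IsCCompact.sUnion ht_fin fun A hA => hc A (ht hA)).exists_extension
    φ.continuous (hφ.mono (sUnion_subset_sUnion ht)) g
  refine ⟨G.comp φ, hεV fun x hx => ?_, mem_range_self G⟩
  simpa [hG x hx] using hε

theorem SeparablyLamSubmetrizable.separableSpace (hsm : SeparablyLamSubmetrizable X lam)
    (hc : ∀ A ∈ lam, IsCCompact A) : @SeparableSpace C(X, ℝ) (setOpenTopology lam) := by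
  let := setOpenTopology lam
  obtain ⟨Y, _, _, f, hf, -, hf_inj⟩ := hsm
  obtain ⟨e, he⟩ := Metric.PiNatEmbed.exists_embedding_to_hilbert_cube (X := Y)
  let φ : C(X, ℕ → unitInterval) := ⟨e ∘ f, he.continuous.comp hf⟩
  exact (denseRange_comp_setOpenTopology hc φ (he.injective.comp_injOn hf_inj)).separableSpace
    (continuous_comp_setOpenTopology φ fun A hA => (hc A hA).isCompact_image φ.continuous)

end Separable

/-- From the terms of the sequence `D` one can select finite subsets whose union satisfies `P`;
this is the conclusion shared by `Sfin` and `MSepBi`. -/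
def HasFiniteSelection {α : Type*} (D : ℕ → Set α) (P : Set α → Prop) : Prop :=
  ∃ F : ℕ → Set α, (∀ n, (F n).Finite ∧ F n ⊆ D n) ∧ P (⋃ n, F n)

/-- Countable fan tightness of the space `Y` with topology `t`, at all of its points. -/
def CountableFanTight {Y : Type*} (t : TopologicalSpace Y) : Prop :=
  ∀ (y : Y) (D : ℕ → Set Y), (∀ n, y ∈ @closure Y t (D n)) →
    HasFiniteSelection D fun S => y ∈ @closure Y t S

/-- Split the sequence into infinitely many subsequences and secure the `k`-th property along the
`k`-th of them. -/
lemma HasFiniteSelection.forall_of_monotone {α : Type*} {D : ℕ → Set α} {P : ℕ → Set α → Prop}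
    (hP : ∀ k, Monotone (P k)) (h : ∀ k (e : ℕ → ℕ), HasFiniteSelection (D ∘ e) (P k)) :
    HasFiniteSelection D fun S => ∀ k, P k S := by
  choose F hF hPF using fun k => h k (Nat.pair k)
  refine ⟨fun n => F n.unpair.1 n.unpair.2, fun n => ?_, fun k => hP k ?_ (hPF k)⟩
  · simpa using hF n.unpair.1 n.unpair.2
  · exact iUnion_subset fun l x hx => mem_iUnion.2 ⟨Nat.pair k l, by simpa using hx⟩

theorem CountableFanTight.mSepBi {Y : Type*} [Nonempty Y] {t : TopologicalSpace Y}
    [SeparableSpace Y] (h : CountableFanTight t) : MSepBi t t := by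
  intro D hD
  obtain ⟨F, hF, hF_closure⟩ : HasFiniteSelection D fun S => ∀ k, denseSeq Y k ∈ closure S :=
    .forall_of_monotone (fun k S T hST hS => closure_mono hST hS)
      fun k e => h (denseSeq Y k) (D ∘ e) fun n => hD (e n) _
  refine ⟨F, hF, dense_closure.1 ((denseRange_denseSeq Y).mono ?_)⟩
  exact range_subset_iff.2 hF_closure

/-- The `V i` may equal `X`, which an f-cover forbids; a single such `i` is then a selection. -/
lemma Sfin.hasFiniteSelection_of_isCozero {ι : Type*} (hS : Sfin (fCovers lam) (fCovers lam))
    {V : ι → Set X} (hV : ∀ i, IsCozero (V i)) {D : ℕ → Set ι}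
    (hD : ∀ n, ∀ A ∈ lam, ∃ i ∈ D n, A ⊆ V i) :
    HasFiniteSelection D fun S => ∀ A ∈ lam, ∃ i ∈ S, A ⊆ V i := by
  by_cases h_univ : ∃ n, ∃ i ∈ D n, V i = univ
  · obtain ⟨n, i, hi, hVi⟩ := h_univ
    exact ⟨fun k => {i} ∩ D k, fun k => ⟨(finite_singleton i).inter_of_left _, inter_subset_right⟩,
      fun A _ => ⟨i, mem_iUnion.2 ⟨n, rfl, hi⟩, hVi ▸ subset_univ A⟩⟩
  · have h_cover (n : ℕ) : V '' D n ∈ fCovers lam := by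
      refine ⟨fun ⟨i, hi, hVi⟩ => h_univ ⟨n, i, hi, hVi⟩, ?_, fun A hA => ?_⟩
      · rintro _ ⟨i, -, rfl⟩
        exact hV i
      · simpa using hD n A hA
    obtain ⟨B, hB, -, -, hB_cover⟩ := hS _ h_cover
    have h_lift (n : ℕ) : ∃ F ⊆ D n, F.Finite ∧ B n = V '' F :=
      exists_subset_image_finite_and.1 ⟨B n, (hB n).2, (hB n).1, rfl⟩
    choose F hFD hF_fin hFB using h_lift
    refine ⟨F, fun n => ⟨hF_fin n, hFD n⟩, fun A hA => ?_⟩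
    obtain ⟨U, hU, hAU⟩ := hB_cover A hA
    obtain ⟨n, hn⟩ := mem_iUnion.1 hU
    rw [hFB n] at hn
    obtain ⟨i, hi, rfl⟩ := hn
    exact ⟨i, mem_iUnion.2 ⟨n, hi⟩, hAU⟩

theorem Sfin.countableFanTight (hS : Sfin (fCovers lam) (fCovers lam))
    (hc : ∀ A ∈ lam, IsCCompact A) (hd : DirectedOn (· ⊆ ·) lam) (ht : TraceClosed lam)
    (hne : lam.Nonempty) : CountableFanTight (setOpenTopology lam) := by
  let := setOpenTopology lam
  intro f D hf
  obtain ⟨F, hF, h_approx⟩ : HasFiniteSelection D fun S =>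
      ∀ k : ℕ, ∀ A ∈ lam, ∃ d ∈ S, d ∈ uniformBall A f (1 / (k + 1)) := by
    refine .forall_of_monotone (fun k S T hST hS A hA => ?_) fun k e => ?_
    · obtain ⟨d, hd, hdA⟩ := hS A hA
      exact ⟨d, hST hd, hdA⟩
    · refine hS.hasFiniteSelection_of_isCozero
        (V := fun d : C(X, ℝ) => {x | |d x - f x| < 1 / ((k : ℝ) + 1)})
        (fun d => isCozero_setOf_lt |d - f| (.const X (1 / (k + 1)))) fun n A hA => ?_
      obtain ⟨d, hdA, hdD⟩ := mem_closure_iff_nhds.1 (hf (e n)) _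
        (uniformBall_mem_nhds hc ht hA f (by positivity : (0 : ℝ) < 1 / (k + 1)))
      exact ⟨d, hdD, hdA⟩
  refine ⟨F, hF, mem_closure_iff.2 fun G hG hfG => ?_⟩
  obtain ⟨A, hA, ε, hε, hεG⟩ := exists_uniformBall_subset hc hd hne hG hfG
  obtain ⟨k, hk⟩ := exists_nat_one_div_lt hε
  obtain ⟨d, hdF, hdA⟩ := h_approx k A hA
  exact ⟨d, hεG (uniformBall_subset_uniformBall subset_rfl f hk.le hdA), hdF⟩

lemma IsFCover.dense_setOf_eqOn_one_compl {𝒰 : Set (Set X)} (h𝒰 : IsFCover lam 𝒰)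
    (hc : ∀ A ∈ lam, IsCCompact A) (hd : DirectedOn (· ⊆ ·) lam) (hne : lam.Nonempty) :
    @Dense _ (setOpenTopology lam) {f : C(X, ℝ) | ∃ U ∈ 𝒰, EqOn f 1 Uᶜ} := by
  let := setOpenTopology lam
  refine dense_iff_inter_open.2 ?_
  rintro G hG ⟨g, hg⟩
  obtain ⟨A, hA, ε, hε, hεG⟩ := exists_uniformBall_subset hc hd hne hG hg
  obtain ⟨U, hU, hAU⟩ := h𝒰.2.2 A hA
  obtain ⟨χ, hχA, hχU⟩ := (hc A hA).exists_eqOn_one_eqOn_zero_compl (h𝒰.2.1 U hU) hAU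
  refine ⟨χ * g + (1 - χ), hεG fun x hx => ?_, U, hU, fun x hx => ?_⟩
  · simpa [hχA hx] using hε
  · simp [hχU hx]

lemma exists_mem_forall_lt_one_of_dense {S : Set C(X, ℝ)}
    (hS : @Dense _ (setOpenTopology lam) S) {A : Set X} (hA : A ∈ lam) :
    ∃ f ∈ S, ∀ x ∈ A, f x < 1 := by
  let := setOpenTopology lam
  obtain ⟨f, hfA, hfS⟩ := hS.inter_open_nonempty _ (isOpen_setOpenTopology hA isOpen_Iio)
    ⟨0, by rintro _ ⟨x, -, rfl⟩; exact one_pos (α := ℝ)⟩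
  exact ⟨f, hfS, fun x hx => hfA (mem_image_of_mem f hx)⟩

theorem MSepBi.sfin_fCovers (hM : MSepBi (setOpenTopology lam) (setOpenTopology lam))
    (hc : ∀ A ∈ lam, IsCCompact A) (hd : DirectedOn (· ⊆ ·) lam) (hne : lam.Nonempty) :
    Sfin (fCovers lam) (fCovers lam) := by
  intro 𝒰 h𝒰
  obtain ⟨F, hF, hF_dense⟩ := hM _ fun n => (h𝒰 n).dense_setOf_eqOn_one_compl hc hd hne
  choose! W hW𝒰 hW using fun n f (hf : f ∈ F n) => (hF n).2 hf
  have h_sub (n : ℕ) : W n '' F n ⊆ 𝒰 n := image_subset_iff.2 (hW𝒰 n)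
  refine ⟨fun n => W n '' F n, fun n => ⟨(hF n).1.image _, h_sub n⟩, ?_, ?_, fun A hA => ?_⟩
  · exact fun h => (mem_iUnion.1 h).elim fun n hn => (h𝒰 n).1 (h_sub n hn)
  · exact fun U h => (mem_iUnion.1 h).elim fun n hn => (h𝒰 n).2.1 U (h_sub n hn)
  · obtain ⟨f, hfF, hfA⟩ := exists_mem_forall_lt_one_of_dense hF_dense hA
    obtain ⟨n, hn⟩ := mem_iUnion.1 hfF
    refine ⟨W n f, mem_iUnion.2 ⟨n, mem_image_of_mem _ hn⟩, fun x hx => ?_⟩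
    by_contra hxW
    exact (hfA x hx).ne (hW n f hn hxW)

lemma sfin_fCovers_empty : Sfin (fCovers (∅ : Set (Set X))) (fCovers ∅) :=
  fun _ _ => ⟨fun _ => ∅, by simp, by simp, by simp, by simp⟩

lemma setOpenTopology_empty : setOpenTopology (∅ : Set (Set X)) = ⊤ := by
  refine top_le_iff.1 (le_generateFrom ?_)
  simp

lemma mSepBi_top {Y : Type*} [Nonempty Y] : MSepBi (⊤ : TopologicalSpace Y) ⊤ := by
  let : TopologicalSpace Y := ⊤
  intro D hD
  choose d hd using fun n => (hD n).nonempty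
  refine ⟨fun n => {d n}, fun n => ⟨finite_singleton _, singleton_subset_iff.2 (hd n)⟩, ?_⟩
  refine dense_iff_inter_open.2 fun U hU hU_ne => ?_
  obtain rfl | rfl := (isOpen_top_iff U).1 hU
  · exact absurd hU_ne not_nonempty_empty
  · exact ⟨d 0, mem_univ _, mem_iUnion.2 ⟨0, rfl⟩⟩

end

theorem sfin_fCovers_iff_mSep_single_general {X : Type*} [TopologicalSpace X]
    {lam : Set (Set X)} (hc : ∀ A ∈ lam, IsCCompact A) (hd : DirectedOn (· ⊆ ·) lam)
    (ht : TraceClosed lam) (hsep : @SeparableSpace C(X, ℝ) (setOpenTopology lam)) :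
    Sfin (fCovers lam) (fCovers lam) ↔ MSepBi (setOpenTopology lam) (setOpenTopology lam) := by
  obtain rfl | hne := lam.eq_empty_or_nonempty
  · rw [setOpenTopology_empty]
    exact iff_of_true sfin_fCovers_empty mSepBi_top
  · exact ⟨fun hS => (hS.countableFanTight hc hd ht hne).mSepBi,
      fun hM => hM.sfin_fCovers hc hd hne⟩

/-- For a Tychonoff separably `λ`-submetrizable space `X` and `λ ∈ Ψ`:
`X` has property `S_fin(Λ(λ), Λ(λ))` iff `C_λ(X)` is M-separable. -/
theorem sfin_fCovers_iff_mSep_single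
    {X : Type*} [TopologicalSpace X] [T35Space X]
    (lam : Set (Set X)) (hlam : MemPsi lam)
    (hsm : SeparablyLamSubmetrizable X lam) :
    Sfin (fCovers lam) (fCovers lam) ↔
      MSepBi (setOpenTopology lam) (setOpenTopology lam) :=
  sfin_fCovers_iff_mSep_single_general hlam.ccompact hlam.directedOn hlam.traceClosed
    (hsm.separableSpace hlam.ccompact)
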